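/- Let R be a commutative ring, let {f_j}_{j ∈ J} be a family of elements of R, and let g ∈ R. Then Loc(R_g) ∩ Loc({R_{f_j} : j ∈ J}) = Loc({R_{g f_j} : j ∈ J}) in D(R). -/

import Mathlib

open CategoryTheory CategoryTheory.Limits CategoryTheory.Pretriangulated ZeroObject

universe w w' v u

section TriangulatedDefs

variable {T : Type u} [Category.{v} T] [Preadditive T] [HasZeroObject T]
  [HasShift T ℤ] [∀ n : ℤ, (shiftFunctor T n).Additive] [Pretriangulated T]

/-- A localizing subcategory of a (pre)triangulated category, encoded as a set of
objects: it is closed under isomorphisms, contains the zero object, is stable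
under shifts, closed under cones of distinguished triangles (hence a full
triangulated subcategory), and closed under arbitrary small coproducts
(phrased via colimit cofans, so that no global existence of coproducts
is needed). -/
structure IsLocalizingSub (S : Set T) : Prop where
  zero_mem : (0 : T) ∈ S
  mem_of_iso : ∀ {x y : T}, (x ≅ y) → x ∈ S → y ∈ S
  shift_mem : ∀ (n : ℤ) {x : T}, x ∈ S → x⟦n⟧ ∈ S
  cone_mem : ∀ (Tr : Triangle T), Tr ∈ distinguishedTriangles →
    Tr.obj₁ ∈ S → Tr.obj₂ ∈ S → Tr.obj₃ ∈ S
  coprod_mem : ∀ {ι : Type w} (f : ι → T) (c : Cofan f), IsColimit c →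
    (∀ i, f i ∈ S) → c.pt ∈ S

/-- A colocalizing subcategory: as `IsLocalizingSub` but with products instead
of coproducts. -/
structure IsColocalizingSub (S : Set T) : Prop where
  zero_mem : (0 : T) ∈ S
  mem_of_iso : ∀ {x y : T}, (x ≅ y) → x ∈ S → y ∈ S
  shift_mem : ∀ (n : ℤ) {x : T}, x ∈ S → x⟦n⟧ ∈ S
  cone_mem : ∀ (Tr : Triangle T), Tr ∈ distinguishedTriangles →
    Tr.obj₁ ∈ S → Tr.obj₂ ∈ S → Tr.obj₃ ∈ S
  prod_mem : ∀ {ι : Type w} (f : ι → T) (c : Fan f), IsLimit c →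
    (∀ i, f i ∈ S) → c.pt ∈ S

/-- `Loc S`: the smallest localizing subcategory containing the set of
objects `S` (the intersection of all localizing subcategories containing it). -/
def Loc (S : Set T) : Set T :=
  ⋂₀ {L : Set T | IsLocalizingSub.{w} L ∧ S ⊆ L}

/-- The right orthogonal of a set of objects. -/
def rightOrth (C : Set T) : Set T :=
  {x : T | ∀ ⦃c : T⦄, c ∈ C → ∀ (g : c ⟶ x), g = 0}

end TriangulatedDefs

section CompactDefs

variable {T : Type u} [Category.{v} T] [Preadditive T]

/-- The canonical comparison map `⨁ᵢ Hom(x, fᵢ) →+ Hom(x, ∐ f)` associated to a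
cofan `c` on a family `f`. -/
noncomputable def cofanHomComparison {ι : Type w} (x : T) (f : ι → T) (c : Cofan f) :
    (Π₀ i, (x ⟶ f i)) →+ (x ⟶ c.pt) :=
  letI := Classical.decEq ι
  DFinsupp.sumAddHom (fun i => AddMonoidHom.mk' (fun φ => φ ≫ c.inj i)
    (fun φ ψ => Preadditive.add_comp _ _ _ φ ψ (c.inj i)))

/-- An object `x` is compact if `Hom(x, -)` commutes with arbitrary small
coproducts, i.e. for every colimit cofan on a family `f`, the canonical map
`⨁ᵢ Hom(x, fᵢ) → Hom(x, ∐ f)` is bijective. -/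
def IsCompactObj (x : T) : Prop :=
  ∀ ⦃ι : Type w⦄ (f : ι → T) (c : Cofan f), IsColimit c →
    Function.Bijective (cofanHomComparison x f c)

end CompactDefs

section DR

variable (R : Type u) [CommRing R] [HasDerivedCategory.{w'} (ModuleCat.{u} R)]

/-- The `R`-module `M`, regarded as an object of the derived category `D(R)`,
as a complex concentrated in degree `0`. -/
noncomputable def smod (M : ModuleCat.{u} R) : DerivedCategory (ModuleCat.{u} R) :=
  (DerivedCategory.singleFunctor (ModuleCat.{u} R) 0).obj M

end DR

/-!
The objects of `D(R)` on which `g` acts invertibly form a localizing subcategory containing `R_g`,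
hence containing `Loc(R_g)`. The functor `R_g ⊗ -` on `D(R)` is triangulated, preserves coproducts
and sends `R_f` to `R_{gf}`; by a comparison on homology, `X ≅ R_g ⊗ X` as soon as `g` acts
invertibly on `X`. So if `X` is in `Loc(R_g)` and in `Loc({R_{f_j}})`, then `X ≅ R_g ⊗ X` is in
`Loc({R_{g f_j}})`.

Conversely, `R_{ab}` is the localization of `A = R_a` at `b`, that is, the cokernel of the injective
multiplication by `bX - 1` on `A[X]`. As an `R`-module `A[X]` is a countable coproduct of copies of
`A`, so `R_{ab}` is in `Loc(R_a)`.

Both directions use that coproducts in `D(R)` are computed on complexes. Coproducts of modules being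
exact, a coproduct of quasi-isomorphisms is a quasi-isomorphism, so that roofs `K_j ← K'_j → L`
assemble into a roof `∐ K_j ← ∐ K'_j → L`.
-/

section HomologyColimits

variable {C : Type u} [Category.{v} C] [Abelian C] {J : Type w} [Category J]

/-- A short complex of diagrams has as homology the diagram of homology objects. -/
noncomputable def homologyDiagramIso (S : ShortComplex (J ⥤ C)) :
    (ShortComplex.functorEquivalence J C).functor.obj S ⋙ ShortComplex.homologyFunctor C ≅
      S.homology :=
  NatIso.ofComponents (fun j ↦ S.mapHomologyIso ((evaluation J C).obj j)) fun f ↦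
    (Iso.eq_comp_inv _).1 ((ShortComplex.homologyMap_mapNatTrans S
      ((evaluation J C).map f)).trans (Category.assoc _ _ _).symm)

lemma preservesColimitsOfShape_shortComplexFunctor [HasColimitsOfShape J C] {ι : Type*}
    (c : ComplexShape ι) (n : ι) :
    PreservesColimitsOfShape J (HomologicalComplex.shortComplexFunctor C c n) where
  preservesColimit := ⟨fun hK ↦ ⟨ShortComplex.isColimitOfIsColimitπ _
    (isColimitOfPreserves (HomologicalComplex.eval C c (c.prev n)) hK)
    (isColimitOfPreserves (HomologicalComplex.eval C c n) hK)
    (isColimitOfPreserves (HomologicalComplex.eval C c (c.next n)) hK)⟩⟩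

variable [HasColimitsOfShape J C] [HasExactColimitsOfShape J C]

lemma preservesColimit_homologyFunctor_of_shortComplex (S : ShortComplex (J ⥤ C)) :
    PreservesColimit ((ShortComplex.functorEquivalence J C).functor.obj S)
      (ShortComplex.homologyFunctor C) := by
  let c : Cocone ((ShortComplex.functorEquivalence J C).functor.obj S) :=
    { pt := S.map colim
      ι :=
        { app j := S.mapNatTrans (colim.ι j)
          naturality i j f := by
            ext
            · exact (colimit.w S.X₁ f).trans (Category.comp_id _).symm
            · exact (colimit.w S.X₂ f).trans (Category.comp_id _).symm
            · exact (colimit.w S.X₃ f).trans (Category.comp_id _).symm } }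
  have hc : IsColimit c := ShortComplex.isColimitOfIsColimitπ c
    (colimit.isColimit S.X₁) (colimit.isColimit S.X₂) (colimit.isColimit S.X₃)
  have hc_homology := (IsColimit.precomposeHomEquiv (homologyDiagramIso S) _).symm
    (colimit.isColimit S.homology)
  refine preservesColimit_of_preserves_colimit_cocone hc (hc_homology.ofIsoColimit
    (Cocone.ext (S.mapHomologyIso colim).symm fun j ↦ ?_))
  exact (Category.assoc _ _ _).trans
    (ShortComplex.homologyMap_mapNatTrans S (colim.ι j)).symm

instance preservesColimitsOfShape_shortComplexHomologyFunctor :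
    PreservesColimitsOfShape J (ShortComplex.homologyFunctor C) where
  preservesColimit {F} :=
    let e := ShortComplex.functorEquivalence J C
    have : PreservesColimit ((e.inverse ⋙ e.functor).obj F) (ShortComplex.homologyFunctor C) :=
      preservesColimit_homologyFunctor_of_shortComplex (e.inverse.obj F)
    preservesColimit_of_iso_diagram _ (e.counitIso.app F)

variable {ι : Type*} {c : ComplexShape ι}

instance preservesColimitsOfShape_homologyFunctor (n : ι) :
    PreservesColimitsOfShape J (HomologicalComplex.homologyFunctor C c n) :=
  have := preservesColimitsOfShape_shortComplexFunctor (C := C) (J := J) c n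
  preservesColimitsOfShape_of_natIso (HomologicalComplex.homologyFunctorIso C c n).symm

lemma quasiIso_colimMap {F G : J ⥤ HomologicalComplex C c} (α : F ⟶ G)
    [∀ j, QuasiIso (α.app j)] : QuasiIso (colimMap α) := by
  refine ⟨fun n ↦ (quasiIsoAt_iff_isIso_homologyMap _ _).2 ?_⟩
  let H := HomologicalComplex.homologyFunctor C c n
  have : IsIso (Functor.whiskerRight α H) := (NatTrans.isIso_iff_isIso_app _).2 fun j ↦
    inferInstanceAs (IsIso (HomologicalComplex.homologyMap (α.app j) n))
  refine (NatIso.isIso_map_iff (preservesColimitNatIso (J := J) H) α).2 ?_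
  exact inferInstanceAs (IsIso (colim.map (Functor.whiskerRight α H)))

end HomologyColimits

section DerivedCategoryCoproducts

variable {C : Type u} [Category.{v} C] {J : Type w} {ι : Type*} {c : ComplexShape ι}

/-- Homotopies on the summands glue to a homotopy on a coproduct of complexes. -/
noncomputable def homotopySigma [Preadditive C] [HasColimitsOfShape (Discrete J) C]
    {K : J → HomologicalComplex C c} {L : HomologicalComplex C c} {f g : ∐ K ⟶ L}
    (h : ∀ j, Homotopy (Sigma.ι K j ≫ f) (Sigma.ι K j ≫ g)) : Homotopy f g :=
  have hK (n : ι) := isColimitCofanMkObjOfIsColimit (HomologicalComplex.eval C c n) _ _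
    (coproductIsCoproduct K)
  have hom_ext {n : ι} {A : C} {a b : (∐ K).X n ⟶ A}
      (hab : ∀ j, (Sigma.ι K j).f n ≫ a = (Sigma.ι K j).f n ≫ b) : a = b :=
    Cofan.IsColimit.hom_ext (hK n) _ _ hab
  let H (m n : ι) : (∐ K).X m ⟶ L.X n := Cofan.IsColimit.desc (hK m) fun j ↦ (h j).hom m n
  have hom_eq (j : J) : (h j).hom = fun m n ↦ (Sigma.ι K j).f m ≫ H m n :=
    funext₂ fun m n ↦ (Cofan.IsColimit.fac (hK m) (fun j ↦ (h j).hom m n) j).symm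
  { hom := H
    zero m n hmn := hom_ext fun j ↦ by
      rw [← congr_fun₂ (hom_eq j) m n, (h j).zero m n hmn, comp_zero]
    comm n := hom_ext fun j ↦ by
      have comm_j := (h j).comm n
      rw [hom_eq, dNext_comp_left, prevD_comp_left] at comm_j
      simpa only [HomologicalComplex.comp_f, ← Preadditive.comp_add] using comm_j }

variable [Abelian C]

instance quasiIso_sigmaMap [HasColimitsOfShape (Discrete J) C]
    [HasExactColimitsOfShape (Discrete J) C] {K L : J → HomologicalComplex C c}
    (φ : ∀ j, K j ⟶ L j) [∀ j, QuasiIso (φ j)] : QuasiIso (Limits.Sigma.map φ) :=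
  let α : Discrete.functor K ⟶ Discrete.functor L := Discrete.natTrans fun j ↦ φ j.as
  have (j : Discrete J) : QuasiIso (α.app j) := inferInstanceAs (QuasiIso (φ j.as))
  quasiIso_colimMap α

open DerivedCategory
variable [HasDerivedCategory.{w'} C]

lemma exists_quasiIso_homotopy_of_Q_map_eq {K L : CochainComplex C ℤ} {f g : K ⟶ L}
    (h : Q.map f = Q.map g) :
    ∃ (K' : CochainComplex C ℤ) (s : K' ⟶ K), QuasiIso s ∧ Nonempty (Homotopy (s ≫ f) (s ≫ g)) := by
  let π := HomotopyCategory.quotient C (.up ℤ)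
  have hQh : Qh.map (π.map f) = Qh.map (π.map g) := by
    rw [← cancel_mono ((quotientCompQhIso C).hom.app L)]
    exact ((quotientCompQhIso C).hom.naturality f).trans
      ((congrArg _ h).trans ((quotientCompQhIso C).hom.naturality g).symm)
  obtain ⟨K', s, hs, hfg⟩ :=
    (MorphismProperty.map_eq_iff_precomp Qh (HomotopyCategory.quasiIso C _) _ _).1 hQh
  obtain ⟨K', rfl⟩ := HomotopyCategory.quotient_obj_surjective K'
  obtain ⟨s, rfl⟩ := π.map_surjective s
  simp only [← Functor.map_comp] at hfg
  exact ⟨K', s, (HomotopyCategory.quotient_map_mem_quasiIso_iff s).1 hs,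
    ⟨HomotopyCategory.homotopyOfEq _ _ hfg⟩⟩

variable [HasColimitsOfShape (Discrete J) C]
    [HasExactColimitsOfShape (Discrete J) C] {K : J → CochainComplex C ℤ}

lemma isIso_Q_map_sigmaMap {L : J → CochainComplex C ℤ}
    (φ : ∀ j, K j ⟶ L j) (h : ∀ j, IsIso (Q.map (φ j))) : IsIso (Q.map (Limits.Sigma.map φ)) := by
  simp only [isIso_Q_map_iff_quasiIso] at h ⊢
  infer_instance

lemma Q_map_eq_of_sigma_ι {L : CochainComplex C ℤ} {f g : ∐ K ⟶ L}
    (h : ∀ j, Q.map (Sigma.ι K j ≫ f) = Q.map (Sigma.ι K j ≫ g)) : Q.map f = Q.map g := by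
  choose K' s hs H using fun j ↦ exists_quasiIso_homotopy_of_Q_map_eq (h j)
  have : IsIso (Q.map (Limits.Sigma.map s)) := (isIso_Q_map_iff_quasiIso _ _).2 inferInstance
  rw [← cancel_epi (Q.map (Limits.Sigma.map s)), ← Functor.map_comp, ← Functor.map_comp]
  refine Q_map_eq_of_homotopy _ (homotopySigma fun j ↦ ?_)
  simpa using (H j).some

lemma eq_zero_of_Q_map_sigma_ι_comp_eq_zero {Y : DerivedCategory C} {f : Q.obj (∐ K) ⟶ Y}
    (h : ∀ j, Q.map (Sigma.ι K j) ≫ f = 0) : f = 0 := by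
  let e := Q.objObjPreimageIso Y
  obtain ⟨L, g, t, _, fac⟩ := left_fac (f ≫ e.inv)
  obtain rfl : f = Q.map g ≫ inv (Q.map t) ≫ e.hom := by simp [← reassoc_of% fac]
  have : Q.map g = Q.map 0 := Q_map_eq_of_sigma_ι fun j ↦ by
    simpa [← Category.assoc, Preadditive.IsIso.comp_right_eq_zero] using h j
  rw [this, Functor.map_zero, zero_comp]

lemma exists_Q_map_sigma_desc {Y : DerivedCategory C} (f : ∀ j, Q.obj (K j) ⟶ Y) :
    ∃ g : Q.obj (∐ K) ⟶ Y, ∀ j, Q.map (Sigma.ι K j) ≫ g = f j := by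
  let e := Q.objObjPreimageIso Y
  choose K' s hs g fac using fun j ↦ right_fac (f j ≫ e.inv)
  have : IsIso (Q.map (Limits.Sigma.map s)) := isIso_Q_map_sigmaMap s hs
  refine ⟨inv (Q.map (Limits.Sigma.map s)) ≫ Q.map (Limits.Sigma.desc g) ≫ e.hom, fun j ↦ ?_⟩
  have ι_inv : Q.map (Sigma.ι K j) ≫ inv (Q.map (Limits.Sigma.map s)) =
      inv (Q.map (s j)) ≫ Q.map (Sigma.ι K' j) := by
    rw [IsIso.comp_inv_eq, Category.assoc, IsIso.eq_inv_comp, ← Functor.map_comp,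
      ← Functor.map_comp, Limits.Sigma.ι_map]
  rw [reassoc_of% ι_inv, ← Functor.map_comp_assoc, Limits.Sigma.ι_desc, ← reassoc_of% (fac j),
    e.inv_hom_id, Category.comp_id]

instance preservesColimitsOfShape_discrete_Q :
    PreservesColimitsOfShape (Discrete J) (Q : _ ⥤ DerivedCategory C) := by
  have h (K : J → CochainComplex C ℤ) : PreservesColimit (Discrete.functor K)
      (Q : _ ⥤ DerivedCategory C) := by
    choose desc fac using fun s : Cofan fun j ↦ (Q.obj (K j) : DerivedCategory C) ↦
      exists_Q_map_sigma_desc s.inj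
    refine preservesColimit_of_preserves_colimit_cocone (coproductIsCoproduct K)
      ((isColimitMapCoconeCofanMkEquiv _ _ _).symm (Cofan.IsColimit.mk _ desc fac fun s m hm ↦ ?_))
    rw [← sub_eq_zero]
    refine eq_zero_of_Q_map_sigma_ι_comp_eq_zero fun j ↦ ?_
    rw [Preadditive.comp_sub, fac, sub_eq_zero]
    exact hm j
  exact preservesColimitsOfShape_of_discrete _

variable (C) in
instance preservesColimitsOfShape_discrete_singleFunctor (n : ℤ) :
    PreservesColimitsOfShape (Discrete J) (singleFunctor C n) :=
  have : PreservesColimitsOfShape (Discrete J) (CochainComplex.singleFunctor C n) :=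
    inferInstanceAs (PreservesColimitsOfShape (Discrete J) (HomologicalComplex.single C _ n))
  preservesColimitsOfShape_of_natIso (singleFunctorIsoCompQ C n).symm

end DerivedCategoryCoproducts

lemma preservesColimitsOfShape_discrete_of_essSurj {C D E : Type*} [Category* C] [Category* D]
    [Category* E] (L : C ⥤ D) [L.EssSurj] (F : D ⥤ E) (J : Type*)
    [HasColimitsOfShape (Discrete J) C] [PreservesColimitsOfShape (Discrete J) L]
    [PreservesColimitsOfShape (Discrete J) (L ⋙ F)] :
    PreservesColimitsOfShape (Discrete J) F := by
  have (X : J → D) : PreservesColimit (Discrete.functor X) F := by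
    let K : Discrete J ⥤ C := Discrete.functor fun j ↦ L.objPreimage (X j)
    have : PreservesColimit (K ⋙ L) F :=
      preservesColimit_of_preserves_colimit_cocone (isColimitOfPreserves L (colimit.isColimit K))
        (isColimitOfPreserves (L ⋙ F) (colimit.isColimit K))
    exact preservesColimit_of_iso_diagram F
      (Discrete.natIso fun j ↦ L.objObjPreimageIso (X j.as) : K ⋙ L ≅ Discrete.functor X)
  exact preservesColimitsOfShape_of_discrete F

section ExactFunctor

variable {C D : Type*} [Category* C] [Abelian C] [HasDerivedCategory C]
  [Category* D] [Abelian D] [HasDerivedCategory D]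
  (F : C ⥤ D) [F.Additive] [PreservesFiniteLimits F] [PreservesFiniteColimits F]

instance preservesColimitsOfShape_discrete_mapDerivedCategory (J : Type*)
    [HasColimitsOfShape (Discrete J) C] [HasExactColimitsOfShape (Discrete J) C]
    [HasColimitsOfShape (Discrete J) D] [HasExactColimitsOfShape (Discrete J) D]
    [PreservesColimitsOfShape (Discrete J) F] :
    PreservesColimitsOfShape (Discrete J) F.mapDerivedCategory :=
  have : PreservesColimitsOfShape (Discrete J) (F.mapHomologicalComplex (ComplexShape.up ℤ)) :=
    HomologicalComplex.preservesColimitsOfShape_of_eval _ fun n ↦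
      inferInstanceAs (PreservesColimitsOfShape (Discrete J)
        (HomologicalComplex.eval C (.up ℤ) n ⋙ F))
  have : PreservesColimitsOfShape (Discrete J) (DerivedCategory.Q ⋙ F.mapDerivedCategory) :=
    preservesColimitsOfShape_of_natIso F.mapDerivedCategoryFactors.symm
  preservesColimitsOfShape_discrete_of_essSurj DerivedCategory.Q _ J

end ExactFunctor

section Localizing

variable {T T' : Type*} [Category* T] [Preadditive T] [HasZeroObject T]
  [HasShift T ℤ] [∀ n : ℤ, (shiftFunctor T n).Additive] [Pretriangulated T]
  [Category* T'] [Preadditive T'] [HasZeroObject T']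
  [HasShift T' ℤ] [∀ n : ℤ, (shiftFunctor T' n).Additive] [Pretriangulated T']

lemma isLocalizingSub_loc (S : Set T) : IsLocalizingSub.{w} (Loc.{w} S) where
  zero_mem _ hL := hL.1.zero_mem
  mem_of_iso e hx L hL := hL.1.mem_of_iso e (hx L hL)
  shift_mem n _ hx L hL := hL.1.shift_mem n (hx L hL)
  cone_mem Tr hTr h₁ h₂ L hL := hL.1.cone_mem Tr hTr (h₁ L hL) (h₂ L hL)
  coprod_mem f c hc hf L hL := hL.1.coprod_mem f c hc fun i ↦ hf i L hL

lemma subset_loc (S : Set T) : S ⊆ Loc.{w} S := fun _ hx _ hL ↦ hL.2 hx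

lemma loc_subset {S L : Set T} (hL : IsLocalizingSub.{w} L) (hS : S ⊆ L) : Loc.{w} S ⊆ L :=
  fun _ hx ↦ hx L ⟨hL, hS⟩

lemma loc_subset_loc {S S' : Set T} (h : S ⊆ Loc.{w} S') : Loc.{w} S ⊆ Loc.{w} S' :=
  loc_subset (isLocalizingSub_loc S') h

lemma IsLocalizingSub.preimage {S : Set T'} (hS : IsLocalizingSub.{w} S) (F : T ⥤ T')
    [F.CommShift ℤ] [F.IsTriangulated] [∀ J : Type w, PreservesColimitsOfShape (Discrete J) F] :
    IsLocalizingSub.{w} (F.obj ⁻¹' S) where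
  zero_mem := hS.mem_of_iso F.mapZeroObject.symm hS.zero_mem
  mem_of_iso e hx := hS.mem_of_iso (F.mapIso e) hx
  shift_mem n _ hx := hS.mem_of_iso ((F.commShiftIso n).app _).symm (hS.shift_mem n hx)
  cone_mem Tr hTr h₁ h₂ := hS.cone_mem _ (F.map_distinguished Tr hTr) h₁ h₂
  coprod_mem f c hc hf :=
    hS.coprod_mem _ _ (isColimitCofanMkObjOfIsColimit F f c.inj hc) hf

/-- The objects of an `R`-linear category on which a given `r : R` acts invertibly. -/
def invertedObjects (C : Type*) [Category* C] [Preadditive C] {R : Type*} [Semiring R]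
    [Linear R C] (r : R) : Set C :=
  {X | IsIso (r • 𝟙 X)}

variable {R : Type*} [Semiring R]

lemma map_mem_invertedObjects {C D : Type*} [Category* C] [Preadditive C] [Linear R C]
    [Category* D] [Preadditive D] [Linear R D] (F : C ⥤ D) [F.Linear R] {r : R} {X : C}
    (hX : X ∈ invertedObjects C r) : F.obj X ∈ invertedObjects D r := by
  have : IsIso (r • 𝟙 X) := hX
  have : IsIso (F.map (r • 𝟙 X)) := inferInstance
  rwa [F.map_smul, F.map_id] at this

lemma isLocalizingSub_invertedObjects [Linear R T] [∀ n : ℤ, (shiftFunctor T n).Linear R] (r : R) :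
    IsLocalizingSub.{w} (invertedObjects T r) where
  zero_mem := ⟨0, (isZero_zero T).eq_of_src _ _, (isZero_zero T).eq_of_src _ _⟩
  mem_of_iso {X Y} e hX := by
    have : IsIso (r • 𝟙 X) := hX
    have : r • 𝟙 Y = e.inv ≫ (r • 𝟙 X) ≫ e.hom := by simp
    rw [invertedObjects, Set.mem_ofPred_eq, this]
    infer_instance
  shift_mem n _ hX := map_mem_invertedObjects (shiftFunctor T n) hX
  cone_mem Tr hTr h₁ h₂ :=
    isIso₃_of_isIso₁₂ (T := Tr) (T' := Tr) { hom₁ := r • 𝟙 _, hom₂ := r • 𝟙 _, hom₃ := r • 𝟙 _ }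
      hTr hTr h₁ h₂
  coprod_mem {ι} f c hc hf := by
    have (i : ι) : IsIso (r • 𝟙 (f i)) := hf i
    let e : Discrete.functor f ≅ Discrete.functor f :=
      Discrete.natIso fun i ↦ asIso (r • 𝟙 (f i.as))
    have : r • 𝟙 c.pt = (hc.coconePointsIsoOfNatIso hc e).hom := hc.hom_ext fun i ↦ by simp [e]
    rw [invertedObjects, Set.mem_ofPred_eq, this]
    infer_instance

end Localizing

section ComparisonWithExactFunctor

variable {C : Type*} [Category* C] [Abelian C] {F : C ⥤ C} [F.Additive]
  [PreservesFiniteLimits F] [PreservesFiniteColimits F] (η : 𝟭 C ⟶ F)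

lemma quasiIso_mapHomologicalComplex_app {ι : Type*} {c : ComplexShape ι}
    (K : HomologicalComplex C c) (hη : ∀ n, IsIso (η.app (K.homology n))) :
    QuasiIso ((NatTrans.mapHomologicalComplex η c).app K) := by
  refine ⟨fun n ↦ (quasiIsoAt_iff_isIso_homologyMap _ _).2 ?_⟩
  have : IsIso (η.app (K.sc n).homology) := hη n
  change IsIso (ShortComplex.homologyMap ((K.sc n).mapNatTrans η))
  rw [ShortComplex.homologyMap_mapNatTrans (K.sc n) η]
  infer_instance

open DerivedCategory
variable [HasDerivedCategory C]

/-- The isomorphism induced by `η` between an object and its image under an exact functor, when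
`η` is invertible on its homology; it is defined through a representing complex. -/
noncomputable def isoMapDerivedCategoryObj (X : DerivedCategory C)
    (hη : ∀ n, IsIso (η.app ((homologyFunctor C n).obj X))) : X ≅ F.mapDerivedCategory.obj X :=
  let K := Q.objPreimage X
  let e : Q.obj K ≅ X := Q.objObjPreimageIso X
  have hK (n : ℤ) : IsIso (η.app (K.homology n)) :=
    (NatTrans.isIso_app_iff_of_iso η (((homologyFunctorFactors C n).app K).symm ≪≫
      (homologyFunctor C n).mapIso e)).2 (hη n)
  let φ := (NatTrans.mapHomologicalComplex η (.up ℤ)).app K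
  have : IsIso (Q.map φ) :=
    (isIso_Q_map_iff_quasiIso C _).2 (quasiIso_mapHomologicalComplex_app η K hK)
  e.symm ≪≫ Q.mapIso ((Functor.mapHomologicalComplexIdIso _ _).symm.app K) ≪≫
    asIso (Q.map φ) ≪≫ (F.mapDerivedCategoryFactors.app K).symm ≪≫ F.mapDerivedCategory.mapIso e

end ComparisonWithExactFunctor

section LinearHomology

variable {R : Type*} [Ring R] {C : Type*} [Category* C] [Abelian C] [Linear R C]

instance linear_homologyFunctor {ι : Type*} (c : ComplexShape ι) (n : ι) :
    (HomologicalComplex.homologyFunctor C c n).Linear R :=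
  have : (HomologicalComplex.shortComplexFunctor C c n).Linear R := {}
  Functor.linear_of_iso R (HomologicalComplex.homologyFunctorIso C c n).symm

instance linear_derivedCategoryHomologyFunctor [HasDerivedCategory C] (n : ℤ) :
    (DerivedCategory.homologyFunctor C n).Linear R :=
  have : Localization.Lifting DerivedCategory.Q (HomologicalComplex.quasiIso C (.up ℤ))
      (HomologicalComplex.homologyFunctor C (.up ℤ) n) (DerivedCategory.homologyFunctor C n) :=
    ⟨DerivedCategory.homologyFunctorFactors C n⟩
  (Localization.functor_linear_iff DerivedCategory.Q (HomologicalComplex.quasiIso C (.up ℤ)) R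
    (HomologicalComplex.homologyFunctor C (.up ℤ) n) _).1 inferInstance

end LinearHomology

section TensorWithLocalization

open MonoidalCategory

variable {R : Type u} [CommRing R]

/-- The natural map `M ⟶ A ⊗ M`, `m ↦ 1 ⊗ m`, for an `R`-algebra `A`. -/
noncomputable def tensorLeftUnit (A : Type u) [Ring A] [Algebra R A] :
    𝟭 (ModuleCat.{u} R) ⟶ tensorLeft (ModuleCat.of R A) where
  app M := ModuleCat.ofHom (TensorProduct.mk R A M 1)

variable {g : R} (A : Type u) [CommRing A] [Algebra R A] [IsLocalization.Away g A]

lemma isIso_tensorLeftUnit_app {M : ModuleCat.{u} R} (hM : M ∈ invertedObjects _ g) :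
    IsIso ((tensorLeftUnit A).app M) := by
  have hg : IsUnit (algebraMap R (Module.End R M) g) :=
    (Module.End.isUnit_iff _).2 ((ConcreteCategory.isIso_iff_bijective (g • 𝟙 M)).1 hM)
  have hid : IsLocalizedModule (.powers g) (ModuleCat.Hom.hom (𝟙 M)) :=
    { map_units := by
        rintro ⟨_, n, rfl⟩
        simpa using hg.pow n
      surj y := ⟨(y, 1), by simp⟩
      exists_of_eq h := ⟨1, by simpa using h⟩ }
  refine ModuleCat.isIso_of_isLocalizedModule_comp hid ?_
  rw [Category.id_comp]
  exact (isLocalizedModule_iff_isBaseChange (.powers g) A (TensorProduct.mk R A M 1)).2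
    (TensorProduct.isBaseChange R M A)

lemma of_mem_invertedObjects : ModuleCat.of R A ∈ invertedObjects _ g := by
  refine (ConcreteCategory.isIso_iff_bijective (g • 𝟙 (ModuleCat.of R A))).2 ?_
  exact (Module.End.isUnit_iff _).1 (IsLocalizedModule.map_units (S := .powers g)
    (Algebra.linearMap R A) ⟨g, Submonoid.mem_powers g⟩)

/-- The isomorphism `R_g ⊗ R_f ≅ R_{gf}`. -/
noncomputable def tensorAwayIso (g f : R) :
    ModuleCat.of R (Localization.Away g) ⊗ ModuleCat.of R (Localization.Away f) ≅
      ModuleCat.of R (Localization.Away (g * f)) :=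
  let A := Localization.Away g
  let B := Localization.Away f
  have : IsLocalization.Away (g * f) (TensorProduct R A B) := IsLocalization.Away.mul' A _ g f
  (IsLocalization.algEquiv (.powers (g * f)) (TensorProduct R A B) _).toLinearEquiv.toModuleIso

end TensorWithLocalization

section DerivedLocalization

open MonoidalCategory DerivedCategory

variable {R : Type u} [CommRing R]

instance flat_moduleCatOf (M : Type*) [AddCommGroup M] [Module R M] [Module.Flat R M] :
    Module.Flat R (ModuleCat.of R M) :=
  inferInstanceAs (Module.Flat R M)

variable [HasDerivedCategory.{w'} (ModuleCat.{u} R)] (g : R)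

/-- The derived localization functor `R_g ⊗ -` on `D(R)`; no resolution is needed since `R_g` is
flat. -/
noncomputable abbrev derivedAway :
    DerivedCategory (ModuleCat.{u} R) ⥤ DerivedCategory (ModuleCat.{u} R) :=
  (tensorLeft (ModuleCat.of R (Localization.Away g))).mapDerivedCategory

variable {g} in
/-- An object on which `g` acts invertibly is its own derived localization. -/
noncomputable def isoDerivedAwayObj {X : DerivedCategory (ModuleCat.{u} R)}
    (hX : X ∈ invertedObjects _ g) : X ≅ (derivedAway g).obj X :=
  isoMapDerivedCategoryObj (tensorLeftUnit (Localization.Away g)) X fun n ↦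
    isIso_tensorLeftUnit_app _ (map_mem_invertedObjects (homologyFunctor _ n) hX)

/-- The isomorphism `R_g ⊗ R_f ≅ R_{gf}` in `D(R)`. -/
noncomputable def derivedAwayObjSmodAwayIso (f : R) :
    (derivedAway g).obj (smod R (.of R (Localization.Away f))) ≅
      smod R (.of R (Localization.Away (g * f))) :=
  ((tensorLeft _).mapDerivedCategorySingleFunctor 0).app _ ≪≫
    (singleFunctor _ 0).mapIso (tensorAwayIso g f)

lemma smod_away_mem_invertedObjects :
    smod R (.of R (Localization.Away g)) ∈ invertedObjects _ g :=
  map_mem_invertedObjects (singleFunctor _ 0) (of_mem_invertedObjects _)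

lemma loc_smod_away_subset_invertedObjects :
    Loc.{u} {smod R (.of R (Localization.Away g))} ⊆ invertedObjects _ g :=
  loc_subset (isLocalizingSub_invertedObjects g)
    (Set.singleton_subset_iff.2 (smod_away_mem_invertedObjects g))

lemma invertedObjects_inter_loc_subset (S : Set (DerivedCategory (ModuleCat.{u} R))) :
    invertedObjects _ g ∩ Loc.{u} S ⊆ Loc.{u} ((derivedAway g).obj '' S) := by
  rintro X ⟨hX, hXS⟩
  have hL := isLocalizingSub_loc.{u} ((derivedAway g).obj '' S)
  have hS : S ⊆ (derivedAway g).obj ⁻¹' Loc.{u} ((derivedAway g).obj '' S) :=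
    Set.image_subset_iff.1 (subset_loc _)
  exact hL.mem_of_iso (isoDerivedAwayObj hX).symm
    (loc_subset (hL.preimage (derivedAway g)) hS hXS)

end DerivedLocalization

section Telescope

open Polynomial

variable {R : Type u} [CommRing R] [HasDerivedCategory.{w'} (ModuleCat.{u} R)]
  {L : Set (DerivedCategory (ModuleCat.{u} R))}

lemma IsLocalizingSub.smod_finsupp_mem (hL : IsLocalizingSub.{u} L) {M : Type u} [AddCommGroup M]
    [Module R M] (hM : smod R (.of R M) ∈ L) (ι : Type u) : smod R (.of R (ι →₀ M)) ∈ L :=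
  hL.coprod_mem _ _ (isColimitCofanMkObjOfIsColimit (DerivedCategory.singleFunctor _ 0) _ _
    (ModuleCat.finsuppCoconeIsColimit R M ι)) fun _ ↦ hM

lemma IsLocalizingSub.smod_mem_of_iso (hL : IsLocalizingSub.{u} L) {M N : Type u} [AddCommGroup M]
    [Module R M] [AddCommGroup N] [Module R N] (e : M ≃ₗ[R] N) (hM : smod R (.of R M) ∈ L) :
    smod R (.of R N) ∈ L :=
  hL.mem_of_iso ((DerivedCategory.singleFunctor _ 0).mapIso e.toModuleIso) hM

lemma IsLocalizingSub.smod_polynomial_mem (hL : IsLocalizingSub.{u} L) {A : Type u} [CommRing A]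
    [Algebra R A] (hA : smod R (.of R A) ∈ L) : smod R (.of R A[X]) ∈ L :=
  hL.smod_mem_of_iso
    ((Finsupp.domLCongr Equiv.ulift).trans ((basisMonomials A).repr.symm.restrictScalars R))
    (hL.smod_finsupp_mem hA (ULift.{u} ℕ))

lemma IsLocalizingSub.smod_mem_of_exact (hL : IsLocalizingSub.{u} L) {M₁ M₂ M₃ : Type u}
    [AddCommGroup M₁] [Module R M₁] [AddCommGroup M₂] [Module R M₂] [AddCommGroup M₃] [Module R M₃]
    {i : M₁ →ₗ[R] M₂} {p : M₂ →ₗ[R] M₃} (hi : Function.Injective i) (hp : Function.Surjective p)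
    (hip : Function.Exact i p) (h₁ : smod R (.of R M₁) ∈ L) (h₂ : smod R (.of R M₂) ∈ L) :
    smod R (.of R M₃) ∈ L := by
  let S : ShortComplex (ModuleCat.{u} R) := .mk (ModuleCat.ofHom i) (ModuleCat.ofHom p)
    (ModuleCat.hom_ext hip.linearMap_comp_eq_zero)
  have hS : S.ShortExact :=
    { exact := (ShortComplex.ShortExact.moduleCat_exact_iff_function_exact S).2 hip
      mono_f := (ModuleCat.mono_iff_injective _).2 hi
      epi_g := (ModuleCat.epi_iff_surjective _).2 hp }
  exact hL.cone_mem _ hS.singleTriangle_distinguished h₁ h₂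

lemma C_mul_X_sub_one_mem_nonZeroDivisors {A : Type*} [CommRing A] (b : A) :
    C b * X - 1 ∈ nonZeroDivisors A[X] :=
  mem_nonzeroDivisors_of_coeff_mem 0 (by simp [isUnit_one.neg.mem_nonZeroDivisors])

lemma exact_mul_adjoinRoot_mk {A : Type*} [CommRing A] (p : A[X]) :
    Function.Exact (p * ·) (AdjoinRoot.mk p) := fun q ↦ by
  rw [AdjoinRoot.mk_eq_zero, dvd_def]
  simp only [Set.mem_range, eq_comm]

variable {A : Type u} [CommRing A] [Algebra R A]

lemma IsLocalizingSub.smod_adjoinRoot_mem (hL : IsLocalizingSub.{u} L)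
    (hA : smod R (.of R A) ∈ L) {p : A[X]} (hp : p ∈ nonZeroDivisors A[X]) :
    smod R (.of R (AdjoinRoot p)) ∈ L :=
  hL.smod_mem_of_exact (i := LinearMap.mulLeft R p)
    (p := (Ideal.Quotient.mkₐ R (Ideal.span {p})).toLinearMap)
    (fun _ _ ↦ (mul_cancel_left_mem_nonZeroDivisors hp).1) AdjoinRoot.mk_surjective
    (exact_mul_adjoinRoot_mk p) (hL.smod_polynomial_mem hA) (hL.smod_polynomial_mem hA)

lemma IsLocalizingSub.smod_away_mem (hL : IsLocalizingSub.{u} L)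
    (hA : smod R (.of R A) ∈ L) (b : A) (B : Type u) [CommRing B] [Algebra A B] [Algebra R B]
    [IsScalarTower R A B] [IsLocalization.Away b B] : smod R (.of R B) ∈ L := by
  have := IsLocalization.adjoin_inv b
  let e : AdjoinRoot (C b * X - 1) ≃ₐ[A] B := IsLocalization.algEquiv (.powers b) _ _
  exact hL.smod_mem_of_iso (e.toLinearEquiv.restrictScalars R)
    (hL.smod_adjoinRoot_mem hA (C_mul_X_sub_one_mem_nonZeroDivisors b))

lemma IsLocalizingSub.smod_away_mul_mem (hL : IsLocalizingSub.{u} L) {a : R}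
    (ha : smod R (.of R (Localization.Away a)) ∈ L) (b : R) :
    smod R (.of R (Localization.Away (a * b))) ∈ L := by
  let B := Localization.Away (algebraMap R (Localization.Away a) b)
  let e : B ≃ₐ[R] Localization.Away (a * b) := IsLocalization.algEquiv (.powers (a * b)) _ _
  exact hL.smod_mem_of_iso e.toLinearEquiv (hL.smod_away_mem ha (algebraMap R _ b) B)

end Telescope

/-- Theorem: for a family `{f_j}` of elements of `R` and `g ∈ R`,
`Loc(R_g) ∩ Loc({R_{f_j}}) = Loc({R_{g·f_j}})` in `D(R)`. -/
theorem loc_localization_inter_loc_family (R : Type u) [CommRing R]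
    [HasDerivedCategory.{w'} (ModuleCat.{u} R)]
    {ι : Type u} (f : ι → R) (g : R) :
    Loc.{u} {smod R (ModuleCat.of R (Localization.Away g))} ∩
        Loc.{u} {x | ∃ j : ι,
          x = smod R (ModuleCat.of R (Localization.Away (f j)))} =
      Loc.{u} {x | ∃ j : ι,
        x = smod R (ModuleCat.of R (Localization.Away (g * f j)))} := by
  apply Set.Subset.antisymm
  · rintro X ⟨hXg, hXf⟩
    refine loc_subset_loc ?_ (invertedObjects_inter_loc_subset g _
      ⟨loc_smod_away_subset_invertedObjects g hXg, hXf⟩)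
    rintro _ ⟨_, ⟨j, rfl⟩, rfl⟩
    exact (isLocalizingSub_loc _).mem_of_iso (derivedAwayObjSmodAwayIso g (f j)).symm
      (subset_loc _ ⟨j, rfl⟩)
  · refine Set.subset_inter (loc_subset_loc ?_) (loc_subset_loc ?_) <;> rintro _ ⟨j, rfl⟩
    · refine (isLocalizingSub_loc _).smod_away_mul_mem ?_ (f j)
      exact subset_loc _ rfl
    · rw [mul_comm]
      refine (isLocalizingSub_loc _).smod_away_mul_mem ?_ g
      exact subset_loc _ ⟨j, rfl⟩
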